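/- (Proposition 3, landmark preservation.) For every STRIPS planning model M over fluents F, every P ⊆ F and every predicate φ : Set F → Prop: if φ is a landmark of the projection f_P(M), then the lifted predicate S ↦ φ(S \ P) is a landmark of M. -/

import Mathlib

/-- A STRIPS planning model over fluents `F` and action labels `A`. -/
structure Strips (F : Type*) (A : Type*) where
  prec : A → Set F
  add : A → Set F
  del : A → Set F
  I : Set F
  G : Set F

/-- Result of applying action `a` in state `S`. -/
def Strips.res {F A : Type*} (M : Strips F A) (a : A) (S : Set F) : Set F :=
  (S \ M.del a) ∪ M.add a

/-- The state trajectory `S₀, S₁, …, Sₙ` of a plan from a state. -/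
def Strips.traj {F A : Type*} (M : Strips F A) : List A → Set F → List (Set F)
  | [], S => [S]
  | a :: π, S => S :: M.traj π (M.res a S)

/-- A plan is executable from `S` if each action's precondition holds when applied. -/
def Strips.exec {F A : Type*} (M : Strips F A) : List A → Set F → Prop
  | [], _ => True
  | a :: π, S => M.prec a ⊆ S ∧ M.exec π (M.res a S)

/-- The final state `Sₙ` of the trajectory of a plan from a state. -/
def Strips.finalState {F A : Type*} (M : Strips F A) (π : List A) (S : Set F) : Set F :=
  π.foldl (fun T a => M.res a T) S

/-- The state `S_k` of the trajectory of a plan from a state. -/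
def Strips.stateAt {F A : Type*} (M : Strips F A) (π : List A) (S : Set F) (k : ℕ) : Set F :=
  M.finalState (π.take k) S

/-- A plan is valid if it is executable from the initial state and achieves the goal. -/
def Strips.Valid {F A : Type*} (M : Strips F A) (π : List A) : Prop :=
  M.exec π M.I ∧ M.G ⊆ M.finalState π M.I

/-- The set `Π_M` of valid plans of `M`. -/
def Strips.Plans {F A : Type*} (M : Strips F A) : Set (List A) :=
  {π | M.Valid π}

/-- The projection `f_P(M)` of a model, projecting out the fluents in `P`. -/
def Strips.proj {F A : Type*} (M : Strips F A) (P : Set F) : Strips F A where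
  prec a := M.prec a \ P
  add a := M.add a \ P
  del a := M.del a \ P
  I := M.I \ P
  G := M.G \ P

/-- `φ` is a (state) landmark of `M`: every valid plan passes through a state satisfying `φ`. -/
def Strips.Landmark {F A : Type*} (M : Strips F A) (φ : Set F → Prop) : Prop :=
  ∀ π ∈ M.Plans, ∃ S ∈ M.traj π M.I, φ S

/-!
Since `(S \ P) \ (del a \ P) = (S \ P) \ del a`, the map `S ↦ S \ P` commutes with applying an
action. Hence a plan `π` valid for `M` is valid for the projection, where its trajectory is the
pointwise image of the one in `M`: a state of the projected trajectory satisfying `φ` has the form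
`S \ P` with `S` on the trajectory in `M`.
-/

namespace Strips

variable {F A : Type*} (M : Strips F A) (P : Set F)

theorem res_proj_sdiff (a : A) (S : Set F) :
    (M.proj P).res a (S \ P) = M.res a S \ P :=
  calc (S \ P) \ (M.del a \ P) ∪ M.add a \ P
    _ = (S \ M.del a) \ P ∪ M.add a \ P := by
      rw [Set.sdiff_sdiff, Set.union_sdiff_self, ← Set.sdiff_sdiff, Set.sdiff_sdiff_comm]
    _ = M.res a S \ P := Set.union_sdiff_distrib.symm

theorem traj_proj_sdiff (π : List A) (S : Set F) :
    (M.proj P).traj π (S \ P) = (M.traj π S).map (· \ P) := by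
  induction π generalizing S with
  | nil => rfl
  | cons a π ih => simp only [traj, res_proj_sdiff, ih, List.map_cons]

theorem finalState_proj_sdiff (π : List A) (S : Set F) :
    (M.proj P).finalState π (S \ P) = M.finalState π S \ P :=
  List.foldl_hom (· \ P) fun S a => res_proj_sdiff M P a S

variable {M} {π : List A}

theorem exec.proj_sdiff {S : Set F} (h : M.exec π S) : (M.proj P).exec π (S \ P) := by
  induction π generalizing S with
  | nil => trivial
  | cons a π ih =>
    obtain ⟨prec_subset, exec_tail⟩ := h
    refine ⟨Set.sdiff_subset_sdiff_left prec_subset, ?_⟩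
    rw [res_proj_sdiff]
    exact ih exec_tail

theorem Valid.proj (h : M.Valid π) : (M.proj P).Valid π := by
  obtain ⟨exec_init, goal_subset⟩ := h
  refine ⟨exec_init.proj_sdiff P, ?_⟩
  calc M.G \ P
    _ ⊆ M.finalState π M.I \ P := Set.sdiff_subset_sdiff_left goal_subset
    _ = (M.proj P).finalState π (M.proj P).I := (finalState_proj_sdiff M P π M.I).symm

end Strips

theorem stmt7 {F A : Type*} (M : Strips F A) (P : Set F) (φ : Set F → Prop)
    (h : (M.proj P).Landmark φ) :
    M.Landmark (fun S => φ (S \ P)) := by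
  intro π hπ
  obtain ⟨T, hT, hφ⟩ := h π (Strips.Valid.proj P hπ)
  have hT_image : T ∈ (M.traj π M.I).map (· \ P) := Strips.traj_proj_sdiff M P π M.I ▸ hT
  obtain ⟨S, hS, rfl⟩ := List.mem_map.mp hT_image
  exact ⟨S, hS, hφ⟩
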